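/- There exists a constant C_a, independent of m, such that for every integer m ≥ 1 and every axially symmetric function F continuously differentiable on a neighborhood of the closure of D_m, ∫_{D_m} (2/r) F ∂_r F dx ≤ (1/2) ∫_{D_m} |∂_r F|² dx + C_a ∫_{D_m} F² dx. -/

import Mathlib

noncomputable section

open Real MeasureTheory Set

/-- Inner radius of the `j`-th rectangle: `r_j = 2^(-j)`. -/
def rW (j : ℕ) : ℝ := (2 : ℝ) ^ (-(j : ℝ))

/-- Height of the `j`-th rectangle: `h_j = 2^(-β (j-1))`. -/
def hH (β : ℝ) (j : ℕ) : ℝ := (2 : ℝ) ^ (-β * ((j : ℝ) - 1))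

/-- The rectangle `S_j` in the `(r, x₃)` cross-section. -/
def Srect (β : ℝ) (j : ℕ) : Set (ℝ × ℝ) :=
  {p : ℝ × ℝ | rW j ≤ p.1 ∧ p.1 < rW (j - 1) ∧ 0 < p.2 ∧ p.2 < hH β j}

/-- The `(r, x₃)` cross-section of the domain `D_m`. -/
def Ddom (β : ℝ) (m : ℕ) : Set (ℝ × ℝ) := ⋃ j ∈ Finset.Icc 1 m, Srect β j

/-- The horizontal part `∂^H D_m` of the boundary of `D_m` (where `x₃` is locally constant). -/
def bdH (β : ℝ) (m : ℕ) : Set (ℝ × ℝ) :=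
  {p : ℝ × ℝ | p.2 = 0 ∧ rW m ≤ p.1 ∧ p.1 ≤ 1} ∪
    ⋃ j ∈ Finset.Icc 1 m,
      {p : ℝ × ℝ | p.2 = hH β j ∧ rW j ≤ p.1 ∧ p.1 ≤ rW (j - 1)}

/-- The vertical part `∂^V D_m` of the boundary of `D_m` (where `r` is locally constant). -/
def bdV (β : ℝ) (m : ℕ) : Set (ℝ × ℝ) :=
  {p : ℝ × ℝ | p.1 = 1 ∧ 0 ≤ p.2 ∧ p.2 ≤ 1} ∪
    {p : ℝ × ℝ | p.1 = rW m ∧ 0 ≤ p.2 ∧ p.2 ≤ hH β m} ∪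
    ⋃ j ∈ Finset.Icc 1 (m - 1),
      {p : ℝ × ℝ | p.1 = rW j ∧ hH β (j + 1) ≤ p.2 ∧ p.2 ≤ hH β j}

/-- The full boundary `∂ D_m` of `D_m`. -/
def bdD (β : ℝ) (m : ℕ) : Set (ℝ × ℝ) := bdH β m ∪ bdV β m

/-- The corner points of the polygonal cross-section of `D_m`
(i.e. the corner circles of the 3D domain). -/
def cornerSet (β : ℝ) (m : ℕ) : Set (ℝ × ℝ) :=
  ({(rW m, 0), ((1 : ℝ), 0), ((1 : ℝ), (1 : ℝ)), (rW m, hH β m)} : Set (ℝ × ℝ)) ∪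
    ⋃ j ∈ Finset.Icc 1 (m - 1),
      ({(rW j, hH β j), (rW j, hH β (j + 1))} : Set (ℝ × ℝ))

/-- Radial partial derivative `∂_r`. -/
def pdr (F : ℝ × ℝ → ℝ) (p : ℝ × ℝ) : ℝ := deriv (fun r => F (r, p.2)) p.1

/-- Vertical partial derivative `∂_{x₃}`. -/
def pdz (F : ℝ × ℝ → ℝ) (p : ℝ × ℝ) : ℝ := deriv (fun z => F (p.1, z)) p.2

/-- The axially symmetric Laplacian `Δ = ∂_r² + (1/r) ∂_r + ∂_{x₃}²`. -/
def cylLap (F : ℝ × ℝ → ℝ) (p : ℝ × ℝ) : ℝ :=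
  pdr (pdr F) p + (1 / p.1) * pdr F p + pdz (pdz F) p

/-- The integral of an axially symmetric function over the 3-dimensional domain `D_m`,
computed in the cross-section: `∫_{D_m} f dx = 2π ∬ F r dr dx₃`. -/
def cylIntegral (β : ℝ) (m : ℕ) (F : ℝ × ℝ → ℝ) : ℝ :=
  ∫ p in Ddom β m, F p * (2 * π * p.1)

/-- The vertical cross-section segment `D_m ∩ {r = c}` of the cross-section. -/
def vertSeg (β : ℝ) (m : ℕ) (c : ℝ) : Set ℝ := {z : ℝ | (c, z) ∈ Ddom β m}

lemma aux_Ddom_succ (β : ℝ) (m : ℕ) : Ddom β (m+1) = Ddom β m ∪ Srect β (m+1) := by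
  ext p
  simp only [Ddom, Set.mem_iUnion, Set.mem_union, Finset.mem_Icc, exists_prop]
  constructor
  · rintro ⟨j, ⟨h1, h2⟩, h3⟩
    rcases Nat.lt_or_ge m j with h | h
    · have : j = m + 1 := by omega
      subst this; exact Or.inr h3
    · exact Or.inl ⟨j, ⟨h1, h⟩, h3⟩
  · rintro (⟨j, ⟨h1, h2⟩, h3⟩ | h)
    · exact ⟨j, ⟨h1, by omega⟩, h3⟩
    · exact ⟨m+1, ⟨by omega, le_rfl⟩, h⟩

lemma aux_rW_anti {i j : ℕ} (h : i ≤ j) : rW j ≤ rW i := by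
  unfold rW
  apply Real.rpow_le_rpow_of_exponent_le (by norm_num)
  have : (i:ℝ) ≤ j := by exact_mod_cast h
  linarith

lemma aux_rW_pos (i : ℕ) : 0 < rW i := by unfold rW; positivity

lemma aux_rW_zero : rW 0 = 1 := by simp [rW]

lemma aux_hH_anti {β : ℝ} (hβ : 1 < β) {i j : ℕ} (h : i ≤ j) : hH β j ≤ hH β i := by
  unfold hH
  apply Real.rpow_le_rpow_of_exponent_le (by norm_num)
  have : (i:ℝ) ≤ j := by exact_mod_cast h
  nlinarith

lemma aux_slice {β : ℝ} (hβ : 1 < β) (z : ℝ) (m : ℕ) :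
    (∃ a, 0 < a ∧ a ≤ 1 ∧ {r : ℝ | (r, z) ∈ Ddom β m} = Ico a 1) ∧
    (0 < z → (m = 0 ∨ z < hH β m) → {r : ℝ | (r, z) ∈ Ddom β m} = Ico (rW m) 1) := by
  induction m with
  | zero =>
    have h0 : {r : ℝ | (r, z) ∈ Ddom β 0} = ∅ := by simp [Ddom]
    rw [h0, aux_rW_zero]
    exact ⟨⟨1, by norm_num, le_rfl, by simp⟩, by simp⟩
  | succ m ih =>
    have hs : {r : ℝ | (r, z) ∈ Ddom β (m+1)} =
        {r : ℝ | (r, z) ∈ Ddom β m} ∪ {r : ℝ | (r, z) ∈ Srect β (m+1)} := by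
      rw [aux_Ddom_succ]; rfl
    have key : 0 < z → z < hH β (m+1) → {r : ℝ | (r, z) ∈ Ddom β (m+1)} = Ico (rW (m+1)) 1 := by
      intro hz hz2
      have h1 := ih.2 hz (by
        rcases Nat.eq_zero_or_pos m with h | h
        · exact Or.inl h
        · exact Or.inr (hz2.trans_le (aux_hH_anti hβ (Nat.le_succ m))))
      have h2 : {r : ℝ | (r, z) ∈ Srect β (m+1)} = Ico (rW (m+1)) (rW m) := by
        ext r; simp [Srect, hz, hz2]
      rw [hs, h1, h2, Set.union_comm, Set.Ico_union_Ico_eq_Ico]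
      · exact aux_rW_anti (Nat.le_succ m)
      · rw [← aux_rW_zero]; exact aux_rW_anti (Nat.zero_le m)
    constructor
    · by_cases h : 0 < z ∧ z < hH β (m+1)
      · refine ⟨rW (m+1), aux_rW_pos _, ?_, key h.1 h.2⟩
        rw [← aux_rW_zero]; exact aux_rW_anti (Nat.zero_le _)
      · have h2 : {r : ℝ | (r, z) ∈ Srect β (m+1)} = ∅ := by
          ext r
          simp only [Srect, Set.mem_ofPred_eq, Set.mem_empty_iff_false, iff_false]
          tauto
        rw [hs, h2, Set.union_empty]; exact ih.1
    · intro hz h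
      exact key hz (by simpa using h)

lemma aux_meas (β : ℝ) (m : ℕ) : MeasurableSet (Ddom β m) := by
  unfold Ddom
  apply Finset.measurableSet_biUnion
  intro j _
  have : Srect β j = Ico (rW j) (rW (j-1)) ×ˢ Ioo 0 (hH β j) := by
    ext p; simp [Srect, and_assoc]
  rw [this]
  exact measurableSet_Ico.prod measurableSet_Ioo

lemma aux_sub {β : ℝ} (hβ : 1 < β) (m : ℕ) :
    Ddom β m ⊆ Icc (rW m) 1 ×ˢ Icc 0 (hH β 1) := by
  intro p hp
  simp only [Ddom, Set.mem_iUnion, Finset.mem_Icc, exists_prop] at hp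
  obtain ⟨j, ⟨h1, h2⟩, h3, h4, h5, h6⟩ := hp
  refine ⟨⟨(aux_rW_anti h2).trans h3, h4.le.trans ?_⟩, h5.le, h6.le.trans (aux_hH_anti hβ h1)⟩
  rw [← aux_rW_zero]; exact aux_rW_anti (Nat.zero_le _)

/-- Uniform absorption of the radial boundary-type term:
`∫ (2/r) F ∂_r F ≤ (1/2) ∫ |∂_r F|² + C_a ∫ F²` on `D_m`, with `C_a` independent of `m`. -/
theorem radial_term_absorption :
    ∃ Ca : ℝ,
      ∀ (β : ℝ), 1 < β → β ≤ 1.1 → ∀ (m : ℕ), 1 ≤ m →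
      ∀ F : ℝ × ℝ → ℝ,
        (∃ U : Set (ℝ × ℝ), IsOpen U ∧ closure (Ddom β m) ⊆ U ∧ ContDiffOn ℝ 1 F U) →
        cylIntegral β m (fun p => (2 / p.1) * F p * pdr F p)
          ≤ (1 / 2) * cylIntegral β m (fun p => (pdr F p) ^ 2)
            + Ca * cylIntegral β m fun p => (F p) ^ 2 := by
  refine ⟨4, ?_⟩
  intro β hβ _ m _ F ⟨U, hU, hUs, hF⟩
  have hcs : closure (Ddom β m) ⊆ Icc (rW m) 1 ×ˢ Icc 0 (hH β 1) :=
    closure_minimal (aux_sub hβ m) (isClosed_Icc.prod isClosed_Icc)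
  have hK : IsCompact (closure (Ddom β m)) :=
    (isCompact_Icc.prod isCompact_Icc).of_isClosed_subset isClosed_closure hcs
  have hdiff : ∀ p ∈ U, HasDerivAt (fun r => F (r, p.2)) (fderiv ℝ F p (1, 0)) p.1 := by
    intro p hp
    have h1 : HasFDerivAt F (fderiv ℝ F p) p :=
      ((hF.contDiffAt (hU.mem_nhds hp)).differentiableAt (by norm_num)).hasFDerivAt
    have h2 : HasDerivAt (fun r : ℝ => (r, p.2)) ((1:ℝ), (0:ℝ)) p.1 :=
      (hasDerivAt_id p.1).prodMk (hasDerivAt_const _ _)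
    exact HasFDerivAt.comp_hasDerivAt (f := fun r : ℝ => (r, p.2)) p.1 h1 h2
  have hpdr : ∀ p ∈ U, HasDerivAt (fun r => F (r, p.2)) (pdr F p) p.1 := by
    intro p hp
    exact (hdiff p hp).differentiableAt.hasDerivAt
  have hpc : ContinuousOn (pdr F) (closure (Ddom β m)) := by
    have h1 : ContinuousOn (fun p => fderiv ℝ F p (1, 0)) U :=
      (hF.continuousOn_fderiv_of_isOpen hU le_rfl).clm_apply continuousOn_const
    refine (h1.mono hUs).congr fun p hp => ?_
    exact (hdiff p (hUs hp)).deriv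
  have hFc : ContinuousOn F (closure (Ddom β m)) := hF.continuousOn.mono hUs
  have hfst : ContinuousOn (fun p : ℝ × ℝ => p.1) (closure (Ddom β m)) :=
    continuous_fst.continuousOn
  have hne : ∀ p ∈ closure (Ddom β m), p.1 ≠ 0 := fun p hp =>
    ((aux_rW_pos m).trans_le (hcs hp).1.1).ne'
  have hint : ∀ G : ℝ × ℝ → ℝ, ContinuousOn G (closure (Ddom β m)) →
      IntegrableOn G (Ddom β m) := fun G hG =>
    (hG.integrableOn_compact hK).mono_set subset_closure
  have c1 : ContinuousOn (fun p : ℝ × ℝ => (2 / p.1) * F p * pdr F p * (2 * π * p.1))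
      (closure (Ddom β m)) :=
    (((continuousOn_const.div hfst hne).mul hFc).mul hpc).mul (continuousOn_const.mul hfst)
  have c2 : ContinuousOn (fun p : ℝ × ℝ => (pdr F p) ^ 2 * (2 * π * p.1))
      (closure (Ddom β m)) := (hpc.pow 2).mul (continuousOn_const.mul hfst)
  have c3 : ContinuousOn (fun p : ℝ × ℝ => (F p) ^ 2 * (2 * π * p.1))
      (closure (Ddom β m)) := (hFc.pow 2).mul (continuousOn_const.mul hfst)
  unfold cylIntegral
  have i1 := hint _ c1
  have i2 := (hint _ c2).const_mul (1/2)
  have i3 := (hint _ c3).const_mul 4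
  rw [← integral_const_mul, ← integral_const_mul, ← integral_add i2 i3]
  -- comparison with the radial derivative of (1 - r^2) F^2
  let E : ℝ × ℝ → ℝ := fun p =>
    2 * π * (2 * F p * pdr F p * (1 - p.1 ^ 2) - 2 * p.1 * (F p) ^ 2)
  have cE : ContinuousOn E (closure (Ddom β m)) :=
    continuousOn_const.mul ((((continuousOn_const.mul hFc).mul hpc).mul
      (continuousOn_const.sub (hfst.pow 2))).sub ((continuousOn_const.mul hfst).mul (hFc.pow 2)))
  have iE := hint _ cE
  have hE : ∫ p in Ddom β m, E p ≤ 0 := by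
    rw [← integral_indicator (aux_meas β m), Measure.volume_eq_prod, integral_prod_symm]
    swap
    · rw [← Measure.volume_eq_prod]
      exact iE.integrable_indicator (aux_meas β m)
    apply integral_nonpos
    intro z
    obtain ⟨⟨a, ha0, ha1, hs⟩, -⟩ := aux_slice hβ z m
    have e1 : (fun r => (Ddom β m).indicator E (r, z)) =
        (Ico a 1).indicator (fun r => E (r, z)) := by
      ext r
      rw [← hs]
      by_cases hr : (r, z) ∈ Ddom β m
      · rw [Set.indicator_of_mem hr, Set.indicator_of_mem (by exact hr)]
      · rw [Set.indicator_of_notMem hr, Set.indicator_of_notMem (by exact hr)]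
    show ∫ r, (Ddom β m).indicator E (r, z) ≤ 0
    rw [e1, integral_indicator measurableSet_Ico, integral_Ico_eq_integral_Ioc,
      ← intervalIntegral.integral_of_le ha1]
    rcases ha1.eq_or_lt with h | h
    · rw [h]; simp
    have hmem : ∀ r ∈ Icc a 1, (r, z) ∈ closure (Ddom β m) := by
      intro r hr
      rw [← closure_Ico h.ne] at hr
      have hm : MapsTo (fun r : ℝ => (r, z)) (Ico a 1) (Ddom β m) := by
        intro r hr
        rw [← hs] at hr
        exact hr
      exact hm.closure (by fun_prop) hr
    have hd : ∀ r ∈ uIcc a 1,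
        HasDerivAt (fun r => 2 * π * ((1 - r ^ 2) * (F (r, z)) ^ 2)) (E (r, z)) r := by
      intro r hr
      rw [uIcc_of_le ha1] at hr
      have h1 := hpdr (r, z) (hUs (hmem r hr))
      have h2 := (((hasDerivAt_const r (1:ℝ)).sub (hasDerivAt_pow 2 r)).mul
        (h1.pow 2)).const_mul (2 * π)
      refine h2.congr_deriv ?_
      simp [E]
      ring
    rw [intervalIntegral.integral_eq_sub_of_hasDerivAt hd]
    · have : 0 ≤ 2 * π * ((1 - a ^ 2) * (F (a, z)) ^ 2) := by
        have : 0 ≤ 1 - a ^ 2 := by nlinarith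
        have := Real.pi_pos
        positivity
      simp only [one_pow, sub_self, zero_mul, mul_zero]
      linarith
    · apply ContinuousOn.intervalIntegrable
      rw [uIcc_of_le ha1]
      exact cE.comp (f := fun r : ℝ => (r, z)) (by fun_prop) hmem
  refine le_trans ?_ (add_le_of_nonpos_left hE)
  have i4 : IntegrableOn (fun p : ℝ × ℝ => 1 / 2 * (pdr F p ^ 2 * (2 * π * p.1)) +
      4 * (F p ^ 2 * (2 * π * p.1))) (Ddom β m) := i2.add i3
  rw [← integral_add iE i4]
  refine setIntegral_mono_on i1 (iE.add i4) (aux_meas β m) ?_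
  intro p hp
  have hp' := aux_sub hβ m hp
  have hr0 : 0 < p.1 := (aux_rW_pos m).trans_le hp'.1.1
  have hr1 : p.1 ≤ 1 := hp'.1.2
  simp only [E, Pi.add_apply]
  have e : 2 / p.1 * F p * pdr F p * (2 * π * p.1) = 2 * π * (2 * F p * pdr F p) := by
    field_simp
  rw [e]
  generalize F p = f
  generalize pdr F p = g
  generalize p.1 = r at *
  have k : 2 * f * g * r ^ 2 + 2 * r * f ^ 2 ≤ 1/2 * g ^ 2 * r + 4 * f ^ 2 * r := by
    have h1 : 0 ≤ r * (g - 2 * r * f) ^ 2 := by positivity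
    have h2 : 0 ≤ r * ((1 - r ^ 2) * f ^ 2) := by
      have : 0 ≤ 1 - r ^ 2 := by nlinarith
      positivity
    nlinarith
  nlinarith [mul_le_mul_of_nonneg_left k (by positivity : 0 ≤ 2 * π)]
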